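/- arXiv:1210.0481 — 4 statements merged into one kernel-verified Lean document; each statement's English description precedes it below -/
import Mathlib

section
/- If R, S, T are finite binary relations on the natural numbers each of cardinality at most n, then the triangle query result Q = {(a,b,c) : (a,b) ∈ R ∧ (b,c) ∈ S ∧ (a,c) ∈ T} has cardinality at most n^(3/2). -/
/-!
The bound follows from `|Q|² ≤ |R| |S| |T|`. By Cauchy–Schwarz over the pairs `(a, b) ∈ R`, the
number of pairs of triples `(a, b, c), (a, b, c') ∈ Q` is at least `|Q|² / |R|`. Such a pair is
determined by `(b, c) ∈ S` and `(a, c') ∈ T`, so there are at most `|S| |T|` of them.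
-/

open Finset

theorem card_sq_le_card_mul_card_pairs_apply_eq {ι κ : Type*} [DecidableEq κ]
    {s : Finset ι} {t : Finset κ} {f : ι → κ} (hf : ∀ i ∈ s, f i ∈ t) :
    #s ^ 2 ≤ #t * #{p ∈ s ×ˢ s | f p.1 = f p.2} := by
  have card_fiber (k : κ) :
      #{p ∈ s ×ˢ s | f p.1 = f p.2 ∧ f p.1 = k} = #{i ∈ s | f i = k} ^ 2 := by
    rw [sq, ← card_product, ← filter_product]
    congr! 2 with p
    grind
  calc #s ^ 2 = (∑ k ∈ t, #{i ∈ s | f i = k}) ^ 2 := by rw [card_eq_sum_card_fiberwise hf]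
    _ ≤ #t * ∑ k ∈ t, #{i ∈ s | f i = k} ^ 2 := sq_sum_le_card_mul_sum_sq
    _ = #t * #{p ∈ s ×ˢ s | f p.1 = f p.2} := by
      rw [card_eq_sum_card_fiberwise (f := fun p : ι × ι ↦ f p.1) (t := t)
        (by grind [Set.MapsTo])]
      simp only [filter_filter, card_fiber]

section Triangle

variable {α β γ : Type*} {R : Finset (α × β)} {S : Finset (β × γ)} {T : Finset (α × γ)}
  {Q : Finset (α × β × γ)}

theorem card_pairs_same_fst_snd_le_card_mul_card [DecidableEq α] [DecidableEq β]
    (hS : ∀ q ∈ Q, q.2 ∈ S) (hT : ∀ q ∈ Q, (q.1, q.2.2) ∈ T) :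
    #{p ∈ Q ×ˢ Q | (p.1.1, p.1.2.1) = (p.2.1, p.2.2.1)} ≤ #S * #T := by
  rw [← card_product]
  refine card_le_card_of_injOn (fun p ↦ (p.1.2, (p.2.1, p.2.2.2))) ?_ ?_
  · intro p hp
    obtain ⟨hp₁, hp₂⟩ := mem_product.1 (mem_filter.1 hp).1
    exact mem_product.2 ⟨hS _ hp₁, hT _ hp₂⟩
  · rintro ⟨⟨a₁, b₁, c₁⟩, a₁', b₁', c₁'⟩ h₁ ⟨⟨a₂, b₂, c₂⟩, a₂', b₂', c₂'⟩ h₂ heq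
    obtain ⟨rfl, rfl⟩ : a₁ = a₁' ∧ b₁ = b₁' := by simpa using (mem_filter.1 h₁).2
    obtain ⟨rfl, rfl⟩ : a₂ = a₂' ∧ b₂ = b₂' := by simpa using (mem_filter.1 h₂).2
    obtain ⟨⟨rfl, rfl⟩, rfl, rfl⟩ : (b₁ = b₂ ∧ c₁ = c₂) ∧ a₁ = a₂ ∧ c₁' = c₂' := by
      simpa [and_assoc] using heq
    rfl

theorem triangle_card_sq_le
    (hQ : ∀ a b c, (a, b, c) ∈ Q → (a, b) ∈ R ∧ (b, c) ∈ S ∧ (a, c) ∈ T) :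
    #Q ^ 2 ≤ #R * (#S * #T) := by
  classical
  calc #Q ^ 2 ≤ #R * #{p ∈ Q ×ˢ Q | (p.1.1, p.1.2.1) = (p.2.1, p.2.2.1)} :=
        card_sq_le_card_mul_card_pairs_apply_eq (f := fun q ↦ (q.1, q.2.1))
          fun _ hq ↦ (hQ _ _ _ hq).1
    _ ≤ #R * (#S * #T) := by
      gcongr
      exact card_pairs_same_fst_snd_le_card_mul_card (fun _ hq ↦ (hQ _ _ _ hq).2.1)
        fun _ hq ↦ (hQ _ _ _ hq).2.2

theorem triangle_query_agm_bound_general {n : ℕ} (hR : #R ≤ n) (hS : #S ≤ n) (hT : #T ≤ n)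
    (hQ : ∀ a b c, (a, b, c) ∈ Q → (a, b) ∈ R ∧ (b, c) ∈ S ∧ (a, c) ∈ T) :
    (#Q : ℝ) ≤ (n : ℝ) ^ ((3 : ℝ) / 2) := by
  have card_sq_le : #Q ^ 2 ≤ n ^ 3 :=
    calc #Q ^ 2 ≤ #R * (#S * #T) := triangle_card_sq_le hQ
      _ ≤ n * (n * n) := by gcongr
      _ = n ^ 3 := by ring
  calc (#Q : ℝ) ≤ √((n : ℝ) ^ 3) := Real.le_sqrt_of_sq_le (mod_cast card_sq_le)
    _ = (n : ℝ) ^ ((3 : ℝ) / 2) := by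
      rw [Real.sqrt_eq_rpow, ← Real.rpow_natCast_mul n.cast_nonneg]
      norm_num

end Triangle

theorem triangle_query_agm_bound
    (n : ℕ) (R S T : Finset (ℕ × ℕ))
    (hR : R.card ≤ n) (hS : S.card ≤ n) (hT : T.card ≤ n)
    (Q : Finset (ℕ × ℕ × ℕ))
    (hQ : ∀ a b c : ℕ, (a, b, c) ∈ Q ↔ (a, b) ∈ R ∧ (b, c) ∈ S ∧ (a, c) ∈ T) :
    (Q.card : ℝ) ≤ (n : ℝ) ^ ((3 : ℝ) / 2) :=
  triangle_query_agm_bound_general hR hS hT fun a b c ↦ (hQ a b c).1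
end

section
/- Let R, S, T be finite binary relations on the natural numbers and let Q = {(a,b,c) : (a,b) ∈ R ∧ (b,c) ∈ S ∧ (a,c) ∈ T}. If nonnegative real numbers λ_R, λ_S, λ_T satisfy the fractional edge cover constraints λ_R + λ_T ≥ 1, λ_R + λ_S ≥ 1, and λ_S + λ_T ≥ 1, then |Q| ≤ |R|^(λ_R) · |S|^(λ_S) · |T|^(λ_T). -/
/-!
For `p, q ≥ 0` with `p + q ≥ 1`, Hölder's inequality holds in the form
`∑ f ^ p * g ^ q ≤ (∑ f) ^ p * (∑ g) ^ q` for nonnegative `f, g`. Eliminating the query variables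
one at a time, `c`, then `b`, then `a`, takes one application each, to the two relations containing
the variable, and the cover constraint at that variable is exactly the condition `p + q ≥ 1`.
-/

section Holder

variable {ι : Type*} {s : Finset ι} {f g : ι → ℝ} {p q : ℝ}

lemma sum_rpow_mul_rpow_le_one (hf : ∀ i ∈ s, 0 ≤ f i) (hg : ∀ i ∈ s, 0 ≤ g i)
    (hf_sum : ∑ i ∈ s, f i ≤ 1) (hg_sum : ∑ i ∈ s, g i ≤ 1)
    (hp : 0 ≤ p) (hq : 0 ≤ q) (hpq : 1 ≤ p + q) :
    ∑ i ∈ s, f i ^ p * g i ^ q ≤ 1 := by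
  -- As `f, g ≤ 1`, the exponents may be lowered until they sum to `1`.
  obtain ⟨p', q', hp', hq', hp'p, hq'q, hsum⟩ :
      ∃ p' q' : ℝ, 0 ≤ p' ∧ 0 ≤ q' ∧ p' ≤ p ∧ q' ≤ q ∧ p' + q' = 1 :=
    ⟨min p 1, 1 - min p 1, by positivity, by simp, min_le_left _ _, by grind, by ring⟩
  have young : ∀ i ∈ s, f i ^ p * g i ^ q ≤ p' * f i + q' * g i := fun i hi ↦ by
    have hfi := hf i hi
    have hgi := hg i hi
    have hfi_one : f i ≤ 1 := (Finset.single_le_sum hf hi).trans hf_sum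
    have hgi_one : g i ≤ 1 := (Finset.single_le_sum hg hi).trans hg_sum
    calc f i ^ p * g i ^ q ≤ f i ^ p' * g i ^ q' := by
          gcongr ?_ * ?_
          · exact Real.rpow_le_rpow_of_exponent_ge' hfi hfi_one hp' hp'p
          · exact Real.rpow_le_rpow_of_exponent_ge' hgi hgi_one hq' hq'q
      _ ≤ p' * f i + q' * g i := Real.geom_mean_le_arith_mean2_weighted hp' hq' hfi hgi hsum
  calc ∑ i ∈ s, f i ^ p * g i ^ q ≤ ∑ i ∈ s, (p' * f i + q' * g i) := Finset.sum_le_sum young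
    _ = p' * ∑ i ∈ s, f i + q' * ∑ i ∈ s, g i := by
        rw [Finset.sum_add_distrib, Finset.mul_sum, Finset.mul_sum]
    _ ≤ p' * 1 + q' * 1 := by gcongr
    _ = 1 := by rw [mul_one, mul_one, hsum]

theorem sum_rpow_mul_rpow_le (hf : ∀ i ∈ s, 0 ≤ f i) (hg : ∀ i ∈ s, 0 ≤ g i)
    (hp : 0 ≤ p) (hq : 0 ≤ q) (hpq : 1 ≤ p + q) :
    ∑ i ∈ s, f i ^ p * g i ^ q ≤ (∑ i ∈ s, f i) ^ p * (∑ i ∈ s, g i) ^ q := by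
  set F := ∑ i ∈ s, f i with hF
  set G := ∑ i ∈ s, g i with hG
  have hF_nonneg : 0 ≤ F := Finset.sum_nonneg hf
  have hG_nonneg : 0 ≤ G := Finset.sum_nonneg hg
  -- When `F = 0`, the quotients `f i / F` are `0` and so are the `f i`; likewise for `G`.
  have hfF : ∀ i ∈ s, F * (f i / F) = f i := fun i hi ↦
    mul_div_cancel_of_imp' fun h ↦ (Finset.sum_eq_zero_iff_of_nonneg hf).1 h i hi
  have hgG : ∀ i ∈ s, G * (g i / G) = g i := fun i hi ↦
    mul_div_cancel_of_imp' fun h ↦ (Finset.sum_eq_zero_iff_of_nonneg hg).1 h i hi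
  have normalized : ∑ i ∈ s, (f i / F) ^ p * (g i / G) ^ q ≤ 1 :=
    sum_rpow_mul_rpow_le_one
      (fun i hi ↦ div_nonneg (hf i hi) hF_nonneg) (fun i hi ↦ div_nonneg (hg i hi) hG_nonneg)
      (by rw [← Finset.sum_div, ← hF]; exact div_self_le_one F)
      (by rw [← Finset.sum_div, ← hG]; exact div_self_le_one G) hp hq hpq
  calc ∑ i ∈ s, f i ^ p * g i ^ q
      = ∑ i ∈ s, F ^ p * G ^ q * ((f i / F) ^ p * (g i / G) ^ q) := by
        refine Finset.sum_congr rfl fun i hi ↦ ?_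
        rw [mul_mul_mul_comm, ← Real.mul_rpow hF_nonneg (div_nonneg (hf i hi) hF_nonneg),
          ← Real.mul_rpow hG_nonneg (div_nonneg (hg i hi) hG_nonneg), hfF i hi, hgG i hi]
    _ = F ^ p * G ^ q * ∑ i ∈ s, (f i / F) ^ p * (g i / G) ^ q := by rw [Finset.mul_sum]
    _ ≤ F ^ p * G ^ q := mul_le_of_le_one_right (by positivity) normalized

end Holder

section Slice

variable {α β : Type*}

/-- The slice `{b | (a, b) ∈ R}` of a finite relation `R`. A ternary relation is sliced as a
relation between its first coordinate and the pair of the other two. Cardinalities of relations are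
computed by summing over slices. -/
noncomputable def slice (R : Finset (α × β)) (a : α) : Finset β :=
  R.preimage (Prod.mk a) (Prod.mk_right_injective a).injOn

@[simp]
lemma mem_slice {R : Finset (α × β)} {a : α} {b : β} : b ∈ slice R a ↔ (a, b) ∈ R :=
  Finset.mem_preimage

lemma sum_card_slice [DecidableEq α] (R : Finset (α × β)) (A : Finset α) :
    ∑ a ∈ A, (slice R a).card = {x ∈ R | x.1 ∈ A}.card := by
  rw [← Finset.card_sigma]
  exact Finset.card_equiv (Equiv.sigmaEquivProd α β) (by simp [and_comm])

lemma sum_card_slice_le (R : Finset (α × β)) (A : Finset α) :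
    ∑ a ∈ A, (slice R a).card ≤ R.card := by
  classical
  exact (sum_card_slice R A).trans_le (Finset.card_filter_le _ _)

lemma sum_card_slice_of_forall_fst_mem {R : Finset (α × β)} {A : Finset α}
    (hA : ∀ x ∈ R, x.1 ∈ A) : ∑ a ∈ A, (slice R a).card = R.card := by
  classical
  rw [sum_card_slice, Finset.filter_true_of_mem hA]

end Slice

section CoverBound

variable {α β γ : Type*} {p q r : ℝ}

lemma card_le_rpow_mul_rpow_of_subset_of_subset {s t u : Finset α} (hst : s ⊆ t) (hsu : s ⊆ u)
    (hp : 0 ≤ p) (hq : 0 ≤ q) (hpq : 1 ≤ p + q) :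
    (s.card : ℝ) ≤ (t.card : ℝ) ^ p * (u.card : ℝ) ^ q :=
  calc (s.card : ℝ) = ∑ _i ∈ s, (1 : ℝ) ^ p * 1 ^ q := by simp
    _ ≤ (∑ _i ∈ s, 1) ^ p * (∑ _i ∈ s, 1) ^ q :=
        sum_rpow_mul_rpow_le (by simp) (by simp) hp hq hpq
    _ = (s.card : ℝ) ^ p * (s.card : ℝ) ^ q := by simp
    _ ≤ (t.card : ℝ) ^ p * (u.card : ℝ) ^ q := by gcongr

lemma card_le_rpow_of_subset_of_subset_product {P S : Finset (β × γ)} {B : Finset β} {C : Finset γ}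
    (hS : P ⊆ S) (hBC : P ⊆ B ×ˢ C) (hp : 0 ≤ p) (hq : 0 ≤ q) (hr : 0 ≤ r)
    (hpq : 1 ≤ p + q) (hqr : 1 ≤ q + r) :
    (P.card : ℝ) ≤ (B.card : ℝ) ^ p * (S.card : ℝ) ^ q * (C.card : ℝ) ^ r := by
  have slice_le (b : β) :
      ((slice P b).card : ℝ) ≤ ((slice S b).card : ℝ) ^ q * (C.card : ℝ) ^ r :=
    card_le_rpow_mul_rpow_of_subset_of_subset (fun c hc ↦ mem_slice.2 (hS (mem_slice.1 hc)))
      (fun c hc ↦ (Finset.mem_product.1 (hBC (mem_slice.1 hc))).2) hq hr hqr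
  have sum_slice_le : ∑ b ∈ B, ((slice S b).card : ℝ) ≤ S.card :=
    mod_cast sum_card_slice_le S B
  calc (P.card : ℝ) = ∑ b ∈ B, ((slice P b).card : ℝ) :=
        mod_cast (sum_card_slice_of_forall_fst_mem fun x hx ↦
          (Finset.mem_product.1 (hBC hx)).1).symm
    _ ≤ ∑ b ∈ B, ((slice S b).card : ℝ) ^ q * (C.card : ℝ) ^ r :=
        Finset.sum_le_sum fun b _ ↦ slice_le b
    _ = (∑ b ∈ B, 1 ^ p * ((slice S b).card : ℝ) ^ q) * (C.card : ℝ) ^ r := by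
        simp only [Real.one_rpow, one_mul, Finset.sum_mul]
    _ ≤ (∑ _b ∈ B, 1) ^ p * (∑ b ∈ B, ((slice S b).card : ℝ)) ^ q * (C.card : ℝ) ^ r := by
        gcongr
        exact sum_rpow_mul_rpow_le (by simp) (by simp) hp hq hpq
    _ ≤ (B.card : ℝ) ^ p * (S.card : ℝ) ^ q * (C.card : ℝ) ^ r := by
        rw [Finset.sum_const, nsmul_one]
        gcongr

theorem triangle_query_fractional_cover_bound_general
    {R : Finset (α × β)} {S : Finset (β × γ)} {T : Finset (α × γ)} {Q : Finset (α × β × γ)}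
    (hQ : ∀ a b c, (a, b, c) ∈ Q → (a, b) ∈ R ∧ (b, c) ∈ S ∧ (a, c) ∈ T)
    (hp : 0 ≤ p) (hq : 0 ≤ q) (hr : 0 ≤ r)
    (hpr : 1 ≤ p + r) (hpq : 1 ≤ p + q) (hqr : 1 ≤ q + r) :
    (Q.card : ℝ) ≤ (R.card : ℝ) ^ p * (S.card : ℝ) ^ q * (T.card : ℝ) ^ r := by
  classical
  let A := Q.image Prod.fst
  have slice_le (a : α) : ((slice Q a).card : ℝ) ≤
      ((slice R a).card : ℝ) ^ p * (S.card : ℝ) ^ q * ((slice T a).card : ℝ) ^ r :=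
    card_le_rpow_of_subset_of_subset_product (fun x hx ↦ (hQ a x.1 x.2 (mem_slice.1 hx)).2.1)
      (fun x hx ↦ by simp [hQ a x.1 x.2 (mem_slice.1 hx)]) hp hq hr hpq hqr
  have sum_slice_R_le : ∑ a ∈ A, ((slice R a).card : ℝ) ≤ R.card :=
    mod_cast sum_card_slice_le R A
  have sum_slice_T_le : ∑ a ∈ A, ((slice T a).card : ℝ) ≤ T.card :=
    mod_cast sum_card_slice_le T A
  calc (Q.card : ℝ) = ∑ a ∈ A, ((slice Q a).card : ℝ) :=
        mod_cast (sum_card_slice_of_forall_fst_mem fun x hx ↦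
          Finset.mem_image_of_mem Prod.fst hx).symm
    _ ≤ ∑ a ∈ A, ((slice R a).card : ℝ) ^ p * (S.card : ℝ) ^ q * ((slice T a).card : ℝ) ^ r :=
        Finset.sum_le_sum fun a _ ↦ slice_le a
    _ = (S.card : ℝ) ^ q * ∑ a ∈ A, ((slice R a).card : ℝ) ^ p * ((slice T a).card : ℝ) ^ r := by
        rw [Finset.mul_sum]
        exact Finset.sum_congr rfl fun a _ ↦ by ring
    _ ≤ (S.card : ℝ) ^ q *
          ((∑ a ∈ A, ((slice R a).card : ℝ)) ^ p * (∑ a ∈ A, ((slice T a).card : ℝ)) ^ r) := by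
        gcongr
        exact sum_rpow_mul_rpow_le (by simp) (by simp) hp hr hpr
    _ ≤ (S.card : ℝ) ^ q * ((R.card : ℝ) ^ p * (T.card : ℝ) ^ r) := by gcongr
    _ = (R.card : ℝ) ^ p * (S.card : ℝ) ^ q * (T.card : ℝ) ^ r := by ring

end CoverBound

theorem triangle_query_fractional_cover_bound
    (R S T : Finset (ℕ × ℕ))
    (Q : Finset (ℕ × ℕ × ℕ))
    (hQ : ∀ a b c : ℕ, (a, b, c) ∈ Q ↔ (a, b) ∈ R ∧ (b, c) ∈ S ∧ (a, c) ∈ T)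
    (lR lS lT : ℝ)
    (hlR : 0 ≤ lR) (hlS : 0 ≤ lS) (hlT : 0 ≤ lT)
    (ha : 1 ≤ lR + lT) (hb : 1 ≤ lR + lS) (hc : 1 ≤ lS + lT) :
    (Q.card : ℝ) ≤ (R.card : ℝ) ^ lR * (S.card : ℝ) ^ lS * (T.card : ℝ) ^ lT :=
  triangle_query_fractional_cover_bound_general (fun a b c ↦ (hQ a b c).1) hlR hlS hlT ha hb hc
end

section
/- Let R, S, T be finite binary relations on the natural numbers with |R| ≤ n, |S| ≤ n, |T| ≤ n, and let Q₁ = {(a,b) : (a,b) ∈ R ∧ b ∈ π₁(S) ∧ a ∈ π₁(T)}. Then the sum over all (a,b) ∈ Q₁ of min{|S_b|, |T_a|} is at most n^(3/2), where S_b = {c : (b,c) ∈ S} and T_a = {c : (a,c) ∈ T}. -/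
/-- The curried fiber `S_b = {c : (b,c) ∈ S}` of a finite binary relation. -/
def fiber (S : Finset (ℕ × ℕ)) (b : ℕ) : Finset ℕ :=
  (S.filter (fun q => q.1 = b)).image Prod.snd

/-!
By Cauchy–Schwarz and `(min x y) ^ 2 ≤ x * y`, the square of `∑ min |S_b| |T_a|` over a finite set
`Q` of pairs `(a, b)` is at most `|Q| * ∑ |T_a| * |S_b|`. Enlarging `Q` to the product of its
projections factors the last sum into `(∑ |T_a|) * (∑ |S_b|)`, which is at most `|T| * |S|` because
distinct fibers of a relation come from disjoint sets of its pairs.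
-/

section

open Finset

section OrderedSemiring

variable {M : Type*} [Semiring M]

lemma sq_min_le_mul [LinearOrder M] [IsOrderedRing M] {x y : M} (hx : 0 ≤ x) (hy : 0 ≤ y) :
    min x y ^ 2 ≤ x * y := by
  rw [sq]
  exact mul_le_mul (min_le_left x y) (min_le_right x y) (le_min hx hy) hx

variable {α β : Type*} {Q : Finset (α × β)} {A : Finset α} {B : Finset β} {f : α → M} {g : β → M}

lemma sum_mul_le_sum_mul_sum_of_subset_product [PartialOrder M] [IsOrderedRing M]
    (hQ : Q ⊆ A ×ˢ B) (hf : ∀ a ∈ A, 0 ≤ f a) (hg : ∀ b ∈ B, 0 ≤ g b) :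
    ∑ p ∈ Q, f p.1 * g p.2 ≤ (∑ a ∈ A, f a) * ∑ b ∈ B, g b := by
  rw [sum_mul_sum, ← sum_product' A B fun a b ↦ f a * g b]
  refine sum_le_sum_of_subset_of_nonneg hQ fun p hp _ ↦ ?_
  obtain ⟨hA, hB⟩ := mem_product.1 hp
  exact mul_nonneg (hf p.1 hA) (hg p.2 hB)

lemma sq_sum_min_le_card_mul_sum_mul_sum [LinearOrder M] [IsStrictOrderedRing M]
    [ExistsAddOfLE M] (hQ : Q ⊆ A ×ˢ B) (hf : ∀ a ∈ A, 0 ≤ f a) (hg : ∀ b ∈ B, 0 ≤ g b) :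
    (∑ p ∈ Q, min (f p.1) (g p.2)) ^ 2 ≤ #Q * ((∑ a ∈ A, f a) * ∑ b ∈ B, g b) :=
  calc (∑ p ∈ Q, min (f p.1) (g p.2)) ^ 2
      ≤ #Q * ∑ p ∈ Q, min (f p.1) (g p.2) ^ 2 := sq_sum_le_card_mul_sum_sq
    _ ≤ #Q * ∑ p ∈ Q, f p.1 * g p.2 := by
        gcongr with p hp
        obtain ⟨hA, hB⟩ := mem_product.1 (hQ hp)
        exact sq_min_le_mul (hf p.1 hA) (hg p.2 hB)
    _ ≤ #Q * ((∑ a ∈ A, f a) * ∑ b ∈ B, g b) := by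
        gcongr
        exact sum_mul_le_sum_mul_sum_of_subset_product hQ hf hg

end OrderedSemiring

lemma sum_card_fiberwise_le_card {ι κ : Type*} [DecidableEq κ] (s : Finset ι) (t : Finset κ)
    (g : ι → κ) : ∑ j ∈ t, #{i ∈ s | g i = j} ≤ #s := by
  rw [sum_card_fiberwise_eq_card_filter]
  exact card_filter_le _ _

lemma card_fiber (S : Finset (ℕ × ℕ)) (b : ℕ) : #(fiber S b) = #{q ∈ S | q.1 = b} := by
  refine card_image_of_injOn fun p hp q hq h ↦ Prod.ext ?_ h
  exact (mem_filter.1 hp).2.trans (mem_filter.1 hq).2.symm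

lemma sqrt_pow_eq_rpow_div_two {x : ℝ} (hx : 0 ≤ x) (k : ℕ) : √(x ^ k) = x ^ ((k : ℝ) / 2) := by
  rw [Real.sqrt_eq_rpow, ← Real.rpow_natCast_mul hx, mul_one_div]

theorem summin_bounded_by_agm_general {α β γ δ : Type*} [DecidableEq α] [DecidableEq β]
    (Q : Finset (α × β)) (S : Finset (β × γ)) (T : Finset (α × δ)) :
    ((∑ p ∈ Q, min #{q ∈ S | q.1 = p.2} #{q ∈ T | q.1 = p.1} : ℕ) : ℝ) ≤ √(#Q * #S * #T) := by
  let degT (a : α) : ℕ := #{q ∈ T | q.1 = a}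
  let degS (b : β) : ℕ := #{q ∈ S | q.1 = b}
  have hsq : (∑ p ∈ Q, min (degS p.2) (degT p.1)) ^ 2 ≤ #Q * #S * #T :=
    calc (∑ p ∈ Q, min (degS p.2) (degT p.1)) ^ 2
        = (∑ p ∈ Q, min (degT p.1) (degS p.2)) ^ 2 := by simp only [min_comm]
      _ ≤ #Q * ((∑ a ∈ Q.image Prod.fst, degT a) * ∑ b ∈ Q.image Prod.snd, degS b) :=
          sq_sum_min_le_card_mul_sum_mul_sum subset_product (fun _ _ ↦ Nat.zero_le _)
            fun _ _ ↦ Nat.zero_le _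
      _ ≤ #Q * (#T * #S) := by
          gcongr
          exacts [sum_card_fiberwise_le_card T _ _, sum_card_fiberwise_le_card S _ _]
      _ = #Q * #S * #T := by ring
  exact Real.le_sqrt_of_sq_le (mod_cast hsq)

end

theorem summin_bounded_by_agm
    (n : ℕ) (R S T : Finset (ℕ × ℕ))
    (hR : R.card ≤ n) (hS : S.card ≤ n) (hT : T.card ≤ n)
    (Q1 : Finset (ℕ × ℕ))
    (hQ1 : ∀ a b : ℕ, (a, b) ∈ Q1 ↔
      (a, b) ∈ R ∧ b ∈ S.image Prod.fst ∧ a ∈ T.image Prod.fst) :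
    ((∑ p ∈ Q1, min (fiber S p.2).card (fiber T p.1).card : ℕ) : ℝ)
      ≤ (n : ℝ) ^ ((3 : ℝ) / 2) := by
  have hQ1_card : Q1.card ≤ n := (Finset.card_le_card fun p hp ↦ ((hQ1 p.1 p.2).1 hp).1).trans hR
  calc ((∑ p ∈ Q1, min (fiber S p.2).card (fiber T p.1).card : ℕ) : ℝ)
      ≤ √(Q1.card * S.card * T.card) := by
        simpa only [card_fiber] using summin_bounded_by_agm_general Q1 S T
    _ ≤ √(n * n * n) := by gcongr
    _ = √(n ^ 3) := by rw [pow_three']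
    _ = (n : ℝ) ^ ((3 : ℝ) / 2) := sqrt_pow_eq_rpow_div_two n.cast_nonneg 3
end

section
/- Renumbering realizes the sum-min as a query result size: let R, S, T be finite binary relations on the natural numbers, define S' = {(b,c) : b ∈ π₁(S) ∧ c < |S_b|} and T' = {(a,c) : a ∈ π₁(T) ∧ c < |T_a|}, and let Q' = {(a,b,c) : (a,b) ∈ R ∧ (b,c) ∈ S' ∧ (a,c) ∈ T'}. Then |Q'| equals the sum over all (a,b) with (a,b) ∈ R, b ∈ π₁(S), a ∈ π₁(T) of min{|S_b|, |T_a|}; moreover |S'| = |S| and |T'| = |T|. -/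
theorem card_eq_sum_card_of_mem_iff {α β : Type*} {r : Finset (α × β)} {s : Finset α}
    {t : α → Finset β} (h : ∀ p, p ∈ r ↔ p.1 ∈ s ∧ p.2 ∈ t p.1) :
    r.card = ∑ a ∈ s, (t a).card := by
  simpa only [Finset.card_eq_sum_ones] using Finset.sum_finset_product r s t h

section Fiber

variable {R S T : Finset (ℕ × ℕ)} {b c : ℕ}

theorem mem_fiber : c ∈ fiber S b ↔ (b, c) ∈ S := by
  simp [fiber]

theorem mem_image_fst_iff_fiber_nonempty :
    b ∈ S.image Prod.fst ↔ (fiber S b).Nonempty := by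
  simp [Finset.Nonempty, mem_fiber]

theorem card_eq_sum_card_fiber (S : Finset (ℕ × ℕ)) :
    S.card = ∑ b ∈ S.image Prod.fst, (fiber S b).card :=
  card_eq_sum_card_of_mem_iff fun _ => by
    rw [mem_fiber, iff_and_self]
    exact Finset.mem_image_of_mem Prod.fst

theorem card_eq_of_card_fiber_eq (h : ∀ b, (fiber S b).card = (fiber T b).card) :
    S.card = T.card := by
  have image_fst_eq : S.image Prod.fst = T.image Prod.fst := by
    ext b
    simp only [mem_image_fst_iff_fiber_nonempty, ← Finset.card_pos, h]
  simp only [card_eq_sum_card_fiber, image_fst_eq, h]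

theorem card_join_eq_sum_card_fiber_inter {Q : Finset (ℕ × ℕ × ℕ)}
    (hQ : ∀ a b c, (a, b, c) ∈ Q ↔ (a, b) ∈ R ∧ (b, c) ∈ S ∧ (a, c) ∈ T) :
    Q.card = ∑ p ∈ R, (fiber S p.2 ∩ fiber T p.1).card := by
  rw [← Finset.card_map (Equiv.prodAssoc ℕ ℕ ℕ).symm.toEmbedding]
  refine card_eq_sum_card_of_mem_iff fun ⟨⟨a, b⟩, c⟩ => ?_
  rw [Finset.mem_map_equiv, Finset.mem_inter, mem_fiber, mem_fiber]
  exact hQ a b c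

end Fiber

/-- `S'` is the renumbering of `S`: the relation with the same first coordinates as `S` in which
each fiber `S_b` is replaced by `{0, …, |S_b| - 1}`. -/
def IsRenumbering (S' S : Finset (ℕ × ℕ)) : Prop :=
  ∀ b c : ℕ, (b, c) ∈ S' ↔ b ∈ S.image Prod.fst ∧ c < (fiber S b).card

namespace IsRenumbering

variable {S S' T T' : Finset (ℕ × ℕ)}

theorem fiber_eq_range (h : IsRenumbering S' S) (b : ℕ) :
    fiber S' b = Finset.range (fiber S b).card := by
  ext c
  rw [mem_fiber, h, mem_image_fst_iff_fiber_nonempty, ← Finset.card_pos, Finset.mem_range]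
  exact and_iff_right_of_imp Nat.zero_lt_of_lt

theorem card_eq (h : IsRenumbering S' S) : S'.card = S.card :=
  card_eq_of_card_fiber_eq fun b => by rw [h.fiber_eq_range, Finset.card_range]

theorem card_fiber_inter_fiber (hS : IsRenumbering S' S) (hT : IsRenumbering T' T) (b a : ℕ) :
    (fiber S' b ∩ fiber T' a).card = min (fiber S b).card (fiber T a).card := by
  rw [hS.fiber_eq_range, hT.fiber_eq_range, Finset.range_inter_range, Finset.card_range]

end IsRenumbering

theorem sum_filter_min_card_fiber (R S T : Finset (ℕ × ℕ)) :
    ∑ p ∈ R.filter (fun p => p.2 ∈ S.image Prod.fst ∧ p.1 ∈ T.image Prod.fst),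
        min (fiber S p.2).card (fiber T p.1).card =
      ∑ p ∈ R, min (fiber S p.2).card (fiber T p.1).card := by
  refine Finset.sum_filter_of_ne fun p _ h => ?_
  simpa only [mem_image_fst_iff_fiber_nonempty, ← Finset.card_pos, ← lt_min_iff]
    using Nat.pos_of_ne_zero h

theorem renumbering_realizes_summin
    (R S T : Finset (ℕ × ℕ))
    (S' T' : Finset (ℕ × ℕ))
    (hS' : ∀ b c : ℕ, (b, c) ∈ S' ↔ b ∈ S.image Prod.fst ∧ c < (fiber S b).card)
    (hT' : ∀ a c : ℕ, (a, c) ∈ T' ↔ a ∈ T.image Prod.fst ∧ c < (fiber T a).card)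
    (Q' : Finset (ℕ × ℕ × ℕ))
    (hQ' : ∀ a b c : ℕ, (a, b, c) ∈ Q' ↔ (a, b) ∈ R ∧ (b, c) ∈ S' ∧ (a, c) ∈ T') :
    Q'.card =
      ∑ p ∈ R.filter (fun p => p.2 ∈ S.image Prod.fst ∧ p.1 ∈ T.image Prod.fst),
        min (fiber S p.2).card (fiber T p.1).card ∧
    S'.card = S.card ∧ T'.card = T.card := by
  have renumS : IsRenumbering S' S := hS'
  have renumT : IsRenumbering T' T := hT'
  refine ⟨?_, renumS.card_eq, renumT.card_eq⟩
  calc Q'.card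
      = ∑ p ∈ R, (fiber S' p.2 ∩ fiber T' p.1).card := card_join_eq_sum_card_fiber_inter hQ'
    _ = ∑ p ∈ R, min (fiber S p.2).card (fiber T p.1).card :=
        Finset.sum_congr rfl fun p _ => renumS.card_fiber_inter_fiber renumT p.2 p.1
    _ = _ := (sum_filter_min_card_fiber R S T).symm
end
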